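/- arXiv:2509.06152 — 2 statements merged into one kernel-verified Lean document; each statement's English description precedes it below -/
import Mathlib

section
/- For a,b ∈ ℤ[ω] with a ≡ b ≡ 1 (mod 3) and gcd(a,b) = 1, the cubic Gauss sum is twisted multiplicative: g(ab) = conj((a/b)₃) · g(a) · g(b). -/
open Complex

noncomputable section

/-- The primitive cube root of unity `ω = e^{2πi/3}`. -/
def ω : ℂ := Complex.exp (2 * Real.pi * Complex.I / 3)

/-- The ring of Eisenstein integers `ℤ[ω]`, as a subring of `ℂ`. -/
def Zω : Subring ℂ := Subring.closure {ω}

/-- `ω` as an element of `ℤ[ω]`. -/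
def ωZ : Zω := ⟨ω, Subring.subset_closure rfl⟩

/-- The ramified prime `λ = 1 - ω` of `ℤ[ω]`. -/
def lamZ : Zω := 1 - ωZ

/-- The norm `N(a) = |a|²` from `ℚ(ω)` to `ℚ`, restricted to `ℤ[ω]`. -/
def Nm (a : Zω) : ℝ := Complex.normSq (a : ℂ)

/-- The norm of an Eisenstein integer, as a natural number. -/
def NmNat (a : Zω) : ℕ := ⌊Complex.normSq (a : ℂ)⌋₊

/-- `e(z) = e^{2πi Tr(z)} = e^{2πi (z + z̄)}`. -/
def eE (z : ℂ) : ℂ := Complex.exp (2 * Real.pi * Complex.I * (z + (starRingEnd ℂ) z))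

/-- `χ` is the cubic residue symbol `χ a b = (a/b)₃` on `ℤ[ω]`:
it is multiplicative in both arguments, and at prime moduli `π` coprime to `3`
it is given by the power-residue congruence
`(a/π)₃ ≡ a^{(N(π)-1)/3} (mod π)`, with values among `{1, ω, ω²}` (and `0` when `π ∣ a`). -/
def IsCubicSymbol (χ : Zω → Zω → Zω) : Prop :=
  (∀ a b₁ b₂ : Zω, χ a (b₁ * b₂) = χ a b₁ * χ a b₂) ∧
  (∀ a₁ a₂ b : Zω, χ (a₁ * a₂) b = χ a₁ b * χ a₂ b) ∧
  (∀ a : Zω, χ a 1 = 1) ∧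
  (∀ a π : Zω, Prime π → IsCoprime π 3 →
    (π ∣ a → χ a π = 0) ∧
    (¬ π ∣ a →
      ((χ a π : ℂ) = 1 ∨ (χ a π : ℂ) = ω ∨ (χ a π : ℂ) = ω ^ 2) ∧
      π ∣ (a ^ ((NmNat π - 1) / 3) - χ a π)))

/-- The shifted cubic Gauss sum `g(ν,c) = Σ_{d mod c} (d/c)₃ e(νd/c)`,
relative to a cubic residue symbol `χ`. -/
def gauss (χ : Zω → Zω → Zω) (ν c : Zω) : ℂ :=
  ∑' q : Zω ⧸ Ideal.span {c},
    ((χ (Quotient.out q) c : Zω) : ℂ) * eE (((ν * Quotient.out q : Zω) : ℂ) / (c : ℂ))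

/-- `μ` is the Möbius function of `ℤ[ω]`. -/
def IsMoebiusZω (μ : Zω → ℤ) : Prop :=
  μ 1 = 1 ∧
  (∀ a : Zω, ¬ Squarefree a → μ a = 0) ∧
  (∀ a b : Zω, IsCoprime a b → μ (a * b) = μ a * μ b) ∧
  (∀ π : Zω, Prime π → μ π = -1)

end

namespace CubicAux

lemma omega_eq : ω = -(1/2) + (Real.sqrt 3 / 2 : ℝ) * Complex.I := by
  unfold ω
  rw [show (2 * Real.pi * Complex.I / 3 : ℂ) = ((2 * Real.pi / 3 : ℝ) : ℂ) * Complex.I by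
    push_cast; ring]
  rw [Complex.exp_mul_I, ← Complex.ofReal_cos, ← Complex.ofReal_sin,
    show (2 * Real.pi / 3 : ℝ) = Real.pi - Real.pi / 3 by ring, Real.cos_pi_sub, Real.sin_pi_sub,
    Real.cos_pi_div_three, Real.sin_pi_div_three]
  push_cast; ring

lemma omega_re : ω.re = -(1/2) := by
  rw [omega_eq]; simp

lemma omega_im : ω.im = Real.sqrt 3 / 2 := by
  rw [omega_eq]; simp

lemma sqrt3 : Real.sqrt 3 * Real.sqrt 3 = 3 := Real.mul_self_sqrt (by norm_num)

lemma omega_sq : ω ^ 2 = -1 - ω := by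
  have := sqrt3
  apply Complex.ext
  · simp [pow_two, omega_re, omega_im]; nlinarith
  · simp [pow_two, omega_re, omega_im]; ring

lemma conj_omega : (starRingEnd ℂ) ω = -1 - ω := by
  apply Complex.ext
  · simp [omega_re]; norm_num
  · simp [omega_im]

lemma omega_cube : ω ^ 3 = 1 := by
  have := omega_sq
  linear_combination (ω - 1) * this

lemma mem_iff (z : ℂ) : z ∈ Zω ↔ ∃ x y : ℤ, z = x + y * ω := by
  constructor
  · intro h
    unfold Zω at h
    induction h using Subring.closure_induction with
    | mem x hx => exact ⟨0, 1, by simpa using hx⟩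
    | zero => exact ⟨0, 0, by simp⟩
    | one => exact ⟨1, 0, by simp⟩
    | add x y _ _ hx hy =>
      obtain ⟨a, b, rfl⟩ := hx
      obtain ⟨c, d, rfl⟩ := hy
      exact ⟨a + c, b + d, by push_cast; ring⟩
    | neg x _ hx =>
      obtain ⟨a, b, rfl⟩ := hx
      exact ⟨-a, -b, by push_cast; ring⟩
    | mul x y _ _ hx hy =>
      obtain ⟨a, b, rfl⟩ := hx
      obtain ⟨c, d, rfl⟩ := hy
      exact ⟨a * c - b * d, a * d + b * c - b * d, by
        push_cast; linear_combination (b * d : ℂ) * omega_sq⟩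
  · rintro ⟨x, y, rfl⟩
    exact Zω.add_mem (intCast_mem _ _) (Zω.mul_mem (intCast_mem _ _) (Subring.subset_closure rfl))

lemma normSq_xy (x y : ℝ) : Complex.normSq (x + y * ω) = x ^ 2 - x * y + y ^ 2 := by
  have := sqrt3
  rw [Complex.normSq_apply]
  simp [omega_re, omega_im]
  linear_combination (y ^ 2 / 4) * this

lemma exists_xy (a : Zω) : ∃ x y : ℤ, (a : ℂ) = x + y * ω := (mem_iff _).1 a.2

lemma coe_NmNat (a : Zω) : (NmNat a : ℝ) = Complex.normSq (a : ℂ) := by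
  obtain ⟨x, y, h⟩ := exists_xy a
  have h1 : Complex.normSq (a : ℂ) = ((x ^ 2 - x * y + y ^ 2 : ℤ) : ℝ) := by
    rw [h]
    have := normSq_xy x y
    push_cast at this ⊢
    exact this
  have h2 : 0 ≤ x ^ 2 - x * y + y ^ 2 := by
    have := Complex.normSq_nonneg (a : ℂ)
    rw [h1] at this
    exact_mod_cast this
  unfold NmNat
  rw [h1]
  obtain ⟨n, hn⟩ := Int.eq_ofNat_of_zero_le h2
  rw [hn]
  simp

lemma NmNat_mul (a b : Zω) : NmNat (a * b) = NmNat a * NmNat b := by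
  have : (NmNat (a * b) : ℝ) = NmNat a * NmNat b := by
    simp [coe_NmNat]
  exact_mod_cast this

lemma NmNat_eq_zero {a : Zω} : NmNat a = 0 ↔ a = 0 := by
  rw [← Nat.cast_eq_zero (R := ℝ), coe_NmNat, Complex.normSq_eq_zero]
  simp

/-- conjugation -/
noncomputable def cj (a : Zω) : Zω := ⟨(starRingEnd ℂ) (a : ℂ), by
  obtain ⟨x, y, h⟩ := exists_xy a
  rw [h]
  refine (mem_iff _).2 ⟨x - y, -y, ?_⟩
  simp [conj_omega]; ring⟩

lemma mul_cj (a : Zω) : a * cj a = (NmNat a : Zω) := by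
  apply Subtype.ext
  have := coe_NmNat a
  simp only [cj, Subring.coe_mul, Complex.mul_conj, ← this]
  simp

lemma isUnit_iff {a : Zω} : IsUnit a ↔ NmNat a = 1 := by
  constructor
  · rintro ⟨u, rfl⟩
    have : NmNat (u : Zω) * NmNat ((u⁻¹ : Zωˣ) : Zω) = 1 := by
      rw [← NmNat_mul]; simp [NmNat]
    exact Nat.eq_one_of_mul_eq_one_right this
  · intro h
    have := mul_cj a
    rw [h, Nat.cast_one] at this
    exact IsUnit.of_mul_eq_one _ this

lemma exists_near (z : ℂ) : ∃ w : Zω, Complex.normSq (z - w) < 1 := by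
  obtain ⟨x, y, rfl⟩ : ∃ x y : ℝ, z = x + y * ω := by
    refine ⟨z.re + z.im / Real.sqrt 3, 2 * z.im / Real.sqrt 3, ?_⟩
    have h3 : Real.sqrt 3 ≠ 0 := by positivity
    apply Complex.ext
    · simp [omega_re, omega_im, -Complex.ofReal_div, -Complex.ofReal_mul, -Complex.ofReal_add]
      norm_cast
      ring
    · simp [omega_re, omega_im, -Complex.ofReal_div, -Complex.ofReal_mul, -Complex.ofReal_add]
      norm_cast
      field_simp
  refine ⟨⟨round x + round y * ω, (mem_iff _).2 ⟨round x, round y, rfl⟩⟩, ?_⟩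
  have : ((x : ℂ) + y * ω - (round x + round y * ω)) =
    ((x - round x : ℝ) : ℂ) + ((y - round y : ℝ) : ℂ) * ω := by push_cast; ring
  simp only []
  rw [this, normSq_xy]
  have h1 := abs_sub_round x
  have h2 := abs_sub_round y
  rw [abs_le] at h1 h2
  nlinarith [h1.1, h1.2, h2.1, h2.2]

lemma exists_div (a b : Zω) (hb : b ≠ 0) : ∃ q : Zω, NmNat (a - b * q) < NmNat b := by
  obtain ⟨w, hw⟩ := exists_near ((a : ℂ) / b)
  refine ⟨w, ?_⟩
  have hb' : (b : ℂ) ≠ 0 := by simpa using hb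
  have : (NmNat (a - b * w) : ℝ) < NmNat b := by
    rw [coe_NmNat, coe_NmNat]
    have : ((a - b * w : Zω) : ℂ) = b * ((a : ℂ) / b - w) := by
      push_cast; field_simp
    rw [this, Complex.normSq_mul]
    have := Complex.normSq_pos.2 hb'
    nlinarith
  exact_mod_cast this

instance pid : IsPrincipalIdealRing Zω := by
  classical
  let E : EuclideanDomain Zω :=
    { (inferInstance : CommRing Zω), (inferInstance : Nontrivial Zω) with
      quotient := fun a b => if h : b = 0 then 0 else (exists_div a b h).choose
      quotient_zero := by simp
      remainder := fun a b => a - b * (if h : b = 0 then 0 else (exists_div a b h).choose)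
      quotient_mul_add_remainder_eq := by intro a b; ring
      r := fun a b => NmNat a < NmNat b
      r_wellFounded := (measure NmNat).wf
      remainder_lt := by
        intro a b hb
        simp only [hb, dite_false]
        exact (exists_div a b hb).choose_spec
      mul_left_not_lt := by
        intro a b hb
        rw [NmNat_mul, not_lt]
        have := Nat.pos_of_ne_zero (mt NmNat_eq_zero.1 hb)
        exact Nat.le_mul_of_pos_right _ this }
  exact @EuclideanDomain.to_principal_ideal_domain _ E

lemma xy_unique {x y : ℤ} (h : (x : ℂ) + y * ω = 0) : x = 0 ∧ y = 0 := by
  have := congrArg Complex.im h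
  simp [omega_im] at this
  subst this
  simpa using h

noncomputable def bas : Module.Basis (Fin 2) ℤ Zω := by
  refine Module.Basis.mk (v := ![1, ωZ]) ?_ ?_
  · rw [LinearIndependent.pair_iff]
    intro s t h
    have := congrArg (Subtype.val) h
    apply xy_unique
    simpa [ωZ] using this
  · rintro a -
    obtain ⟨x, y, h⟩ := exists_xy a
    have : a = x • (1 : Zω) + y • ωZ := by
      apply Subtype.ext
      simpa [ωZ] using h
    rw [this]
    exact add_mem (Submodule.smul_mem _ _ (Submodule.subset_span ⟨0, rfl⟩))
      (Submodule.smul_mem _ _ (Submodule.subset_span ⟨1, rfl⟩))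

instance : Module.Free ℤ Zω := Module.Free.of_basis bas
instance : Module.Finite ℤ Zω := Module.Finite.of_basis bas

lemma norm_natAbs (a : Zω) : (Algebra.norm ℤ a).natAbs = NmNat a := by
  obtain ⟨x, y, h⟩ := exists_xy a
  have h0 : a = x • (1 : Zω) + y • ωZ := by
    apply Subtype.ext
    simpa [ωZ] using h
  have hb0 : bas 0 = 1 := by simp [bas]
  have hb1 : bas 1 = ωZ := by simp [bas]
  have hm0 : a * bas 0 = x • bas 0 + y • bas 1 := by
    rw [hb0, hb1, mul_one, h0]
  have hm1 : a * bas 1 = (-y) • bas 0 + (x - y) • bas 1 := by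
    rw [hb0, hb1]
    apply Subtype.ext
    simp only [Subring.coe_mul, h]
    simp [ωZ]
    linear_combination (y : ℂ) * omega_sq
  have hn : Algebra.norm ℤ a = x ^ 2 - x * y + y ^ 2 := by
    rw [Algebra.norm_eq_matrix_det bas, Matrix.det_fin_two]
    simp only [Algebra.leftMulMatrix_eq_repr_mul, hm0, hm1, map_add, map_smul,
      Module.Basis.repr_self, Finsupp.add_apply, Finsupp.smul_apply, smul_eq_mul]
    simp
    ring
  have h1 : (NmNat a : ℝ) = ((x ^ 2 - x * y + y ^ 2 : ℤ) : ℝ) := by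
    rw [coe_NmNat, h]
    have := normSq_xy x y
    push_cast at this ⊢
    exact this
  have h2 : (NmNat a : ℤ) = x ^ 2 - x * y + y ^ 2 := by exact_mod_cast h1
  rw [hn, ← h2]
  simp

lemma card_quot (a : Zω) : Nat.card (Zω ⧸ Ideal.span {a}) = NmNat a := by
  rw [← norm_natAbs, ← Ideal.absNorm_span_singleton]
  rfl

lemma finite_quot {a : Zω} (ha : a ≠ 0) : Finite (Zω ⧸ Ideal.span {a}) :=
  Nat.finite_of_card_ne_zero (by rw [card_quot]; exact mt NmNat_eq_zero.1 ha)

lemma omegaZ_prim : IsPrimitiveRoot ωZ 3 := by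
  refine IsPrimitiveRoot.of_map_of_injective (f := Zω.subtype) ?_ Subtype.val_injective
  exact Complex.isPrimitiveRoot_exp 3 (by norm_num)

lemma omegaZ_sq : ωZ ^ 2 = -1 - ωZ := Subtype.ext (by simpa [ωZ] using omega_sq)

/-- Elements of small norm divisible by 3 vanish. -/
lemma eq_zero_of_dvd {z : Zω} (h3 : (3 : Zω) ∣ z) (h : NmNat z < 9) : z = 0 := by
  obtain ⟨w, rfl⟩ := h3
  rw [NmNat_mul] at h
  have : NmNat (3 : Zω) = 9 := by
    have : (NmNat (3 : Zω) : ℝ) = 9 := by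
      have h3 : ((3 : Zω) : ℂ) = (3 : ℝ) := by norm_cast
      rw [coe_NmNat, h3, Complex.normSq_ofReal]
      norm_num
    exact_mod_cast this
  rw [this] at h
  have : NmNat w = 0 := by omega
  rw [NmNat_eq_zero] at this
  simp [this]

lemma NmNat_add_unit {u v : Zω} (hu : NmNat u = 1) (hv : NmNat v = 1) : NmNat (u + v) < 9 := by
  have h : ∀ u : Zω, NmNat u = 1 → ‖(u : ℂ)‖ = 1 := by
    intro u hu
    have := coe_NmNat u
    rw [hu, Complex.normSq_eq_norm_sq] at this
    have h0 := norm_nonneg (u : ℂ)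
    push_cast at this
    nlinarith
  have h1 := norm_add_le (u : ℂ) v
  rw [h u hu, h v hv] at h1
  have : (NmNat (u + v) : ℝ) < 9 := by
    rw [coe_NmNat, Complex.normSq_eq_norm_sq]
    push_cast
    nlinarith [norm_nonneg ((u : ℂ) + v)]
  exact_mod_cast this

lemma NmNat_one : NmNat (1 : Zω) = 1 := isUnit_iff.1 isUnit_one

lemma unit_eq_one {u : Zω} (hu : IsUnit u) (h3 : (3 : Zω) ∣ u - 1) : u = 1 := by
  refine sub_eq_zero.1 (eq_zero_of_dvd h3 ?_)
  rw [sub_eq_add_neg]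
  exact NmNat_add_unit (isUnit_iff.1 hu) (isUnit_iff.1 isUnit_one.neg)

end CubicAux

namespace CubicAux

lemma coprime_three {c : Zω} (hc : (3 : Zω) ∣ c - 1) : IsCoprime c 3 := by
  obtain ⟨w, hw⟩ := hc
  exact ⟨1, -w, by linear_combination hw⟩

lemma cube_eq {π v v' : Zω} (hπ : Prime π) (hc : IsCoprime π 3) (hv : v ^ 3 = 1) (hv' : v' ^ 3 = 1)
    (h : π ∣ v - v') : v = v' := by
  by_contra hne
  have h1 : (v - v') * (v ^ 2 + v * v' + v' ^ 2) = 0 := by linear_combination hv - hv'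
  have h2 : v ^ 2 + v * v' + v' ^ 2 = 0 := (mul_eq_zero.1 h1).resolve_left (sub_ne_zero.2 hne)
  have h3 : π ∣ 3 := by
    have h4 : (3 : Zω) = (v - v') * (-(v - v') * (v * v') ^ 2) := by
      have h5 : (v * v') ^ 3 = 1 := by rw [mul_pow, hv, hv', one_mul]
      linear_combination (-3) * h5 + ((v * v') ^ 2) * h2
    rw [h4]
    exact h.mul_right _
  exact hπ.not_isUnit (hc.isUnit_of_dvd' dvd_rfl h3)

/-- `F` is the residue field at `π`. -/
structure Res (π : Zω) (F : Type) [Field F] [Fintype F] (r : Zω →+* F) : Prop where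
  surj : Function.Surjective r
  ker : ∀ x, r x = 0 ↔ π ∣ x
  card : Fintype.card F = NmNat π

lemma exists_res {π : Zω} (hπ : Prime π) :
    ∃ (F : Type) (_ : Field F) (_ : Fintype F) (r : Zω →+* F), Res π F r := by
  have hmax : (Ideal.span {π}).IsMaximal :=
    PrincipalIdealRing.isMaximal_of_irreducible hπ.irreducible
  let : Field (Zω ⧸ Ideal.span {π}) := Ideal.Quotient.field _
  have := finite_quot hπ.ne_zero
  let := Fintype.ofFinite (Zω ⧸ Ideal.span {π})
  refine ⟨Zω ⧸ Ideal.span {π}, inferInstance, inferInstance, Ideal.Quotient.mk _, ?_, ?_, ?_⟩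
  · exact Ideal.Quotient.mk_surjective
  · intro x
    exact Ideal.Quotient.eq_zero_iff_mem.trans Ideal.mem_span_singleton
  · rw [← card_quot, Nat.card_eq_fintype_card]

section
variable {χ : Zω → Zω → Zω} (hχ : IsCubicSymbol χ) {π : Zω} (hπ : Prime π) (hc : IsCoprime π 3)
  {F : Type} [Field F] [Fintype F] {r : Zω →+* F} (hr : Res π F r)

lemma coe_cube {v : Zω} (h : (v : ℂ) = 1 ∨ (v : ℂ) = ω ∨ (v : ℂ) = ω ^ 2) : v ^ 3 = 1 := by
  apply Subtype.ext
  have := omega_cube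
  rcases h with h | h | h
  · simp [h]
  · simp [h, this]
  · simp only [Subring.coe_pow, h, Subring.coe_one]
    linear_combination (ω ^ 3 + 1) * this

include hχ hπ hc in
lemma chi_zero {a : Zω} (h : π ∣ a) : χ a π = 0 := (hχ.2.2.2 a π hπ hc).1 h

include hχ hπ hc in
lemma chi_cube {a : Zω} (h : ¬ π ∣ a) : (χ a π) ^ 3 = 1 :=
  coe_cube ((hχ.2.2.2 a π hπ hc).2 h).1

include hπ hc hr in
lemma three_dvd : 3 ∣ Fintype.card F - 1 := by
  have h1 : r ωZ ^ 3 = 1 := by rw [← map_pow, omegaZ_prim.pow_eq_one, map_one]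
  have h2 : r ωZ ≠ 1 := by
    intro h
    have : π ∣ ωZ - 1 := by rw [← hr.ker, map_sub, h, map_one, sub_self]
    exact omegaZ_prim.ne_one (by norm_num) (cube_eq hπ hc omegaZ_prim.pow_eq_one (one_pow 3) this)
  have h3 : orderOf (r ωZ) = 3 := orderOf_eq_prime h1 h2
  rw [← h3]
  apply orderOf_dvd_of_pow_eq_one
  apply FiniteField.pow_card_sub_one_eq_one
  intro h
  rw [h] at h1
  norm_num at h1

lemma card_gt : 0 < Fintype.card F - 1 := by
  have := Fintype.one_lt_card (α := F)
  omega

include hχ hπ hc hr in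
lemma chi_res (a : Zω) : r (χ a π) = r a ^ ((Fintype.card F - 1) / 3) := by
  by_cases h : π ∣ a
  · rw [chi_zero hχ hπ hc h, (hr.ker a).2 h, map_zero, zero_pow]
    have := three_dvd hπ hc hr
    have := card_gt (F := F)
    omega
  · have := ((hχ.2.2.2 a π hπ hc).2 h).2
    rw [← hr.ker, map_sub, map_pow, ← hr.card, sub_eq_zero] at this
    exact this.symm

include hχ hπ hc in
lemma chi_congr {a b : Zω} (h : π ∣ a - b) : χ a π = χ b π := by
  by_cases ha : π ∣ a
  · have hb : π ∣ b := by simpa using dvd_sub ha h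
    rw [chi_zero hχ hπ hc ha, chi_zero hχ hπ hc hb]
  · have hb : ¬ π ∣ b := fun hb => ha (by simpa using dvd_add h hb)
    obtain ⟨F, _, _, r, hr⟩ := exists_res hπ
    refine cube_eq hπ hc (chi_cube hχ hπ hc ha) (chi_cube hχ hπ hc hb) ?_
    rw [← hr.ker, map_sub, chi_res hχ hπ hc hr, chi_res hχ hπ hc hr, sub_eq_zero]
    rw [← hr.ker, map_sub, sub_eq_zero] at h
    rw [h]

include hχ hπ hc in
lemma chi_one : χ 1 π = 1 := by
  have h1 : ¬ π ∣ 1 := fun h => hπ.not_isUnit (isUnit_of_dvd_one h)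
  have h := chi_cube hχ hπ hc h1
  have h2 := hχ.2.1 1 1 π
  rw [mul_one] at h2
  have h3 : χ 1 π ≠ 0 := by
    intro h0; rw [h0] at h; norm_num at h
  exact (mul_right_cancel₀ h3 (by rw [one_mul]; exact h2)).symm

include hχ hπ hc in
lemma chi_neg_one : χ (-1) π = 1 := by
  have h1 : ¬ π ∣ -1 := fun h => hπ.not_isUnit (isUnit_of_dvd_unit h isUnit_one.neg)
  have h := chi_cube hχ hπ hc h1
  have h2 := hχ.2.1 (-1) (-1) π
  rw [neg_mul_neg, mul_one, chi_one hχ hπ hc] at h2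
  linear_combination h + (χ (-1) π) * h2

include hχ hπ hc hr in
lemma exists_char : ∃ c : MulChar F Zω, ∀ x, c (r x) = χ x π := by
  have key : ∀ x y, r x = r y → χ x π = χ y π := by
    intro x y h
    apply chi_congr hχ hπ hc
    rw [← hr.ker, map_sub, h, sub_self]
  let s : F → Zω := Function.surjInv hr.surj
  have hs : ∀ x, r (s x) = x := Function.surjInv_eq hr.surj
  refine ⟨{ toFun := fun x => χ (s x) π, map_one' := ?_, map_mul' := ?_, map_nonunit' := ?_ }, ?_⟩
  · rw [← chi_one hχ hπ hc]
    exact key _ _ (by rw [hs, map_one])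
  · intro x y
    rw [← hχ.2.1]
    exact key _ _ (by rw [hs, map_mul, hs, hs])
  · intro x hx
    have : x = 0 := by simpa using hx
    apply chi_zero hχ hπ hc
    rw [← hr.ker, hs, this]
  · intro x
    exact key _ _ (hs _)

variable {c : MulChar F Zω} (hcx : ∀ x, c (r x) = χ x π)

include hχ hπ hc hr hcx

lemma char_res (x : F) : r (c x) = x ^ ((Fintype.card F - 1) / 3) := by
  obtain ⟨y, rfl⟩ := hr.surj x
  rw [hcx, chi_res hχ hπ hc hr]

lemma char_cube : c ^ 3 = 1 := by
  ext1 x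
  obtain ⟨y, hy⟩ := hr.surj (x : F)
  rw [MulChar.pow_apply_coe, MulChar.one_apply_coe, ← hy, hcx]
  apply chi_cube hχ hπ hc
  rw [← hr.ker, hy]
  exact x.ne_zero

lemma char_ne_one : c ≠ 1 := by
  classical
  intro h
  obtain ⟨g, hg⟩ := IsCyclic.exists_generator (α := Fˣ)
  have h1 := char_res hχ hπ hc hr hcx (g : F)
  rw [h, MulChar.one_apply_coe, map_one] at h1
  have h2 : orderOf g = Fintype.card F - 1 := by
    rw [orderOf_eq_card_of_forall_mem_zpowers hg, Nat.card_eq_fintype_card, Fintype.card_units]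
  have h3 : g ^ ((Fintype.card F - 1) / 3) = 1 := Units.ext (by simpa using h1.symm)
  have h4 := orderOf_dvd_of_pow_eq_one h3
  have := three_dvd hπ hc hr
  have := card_gt (F := F)
  rw [h2] at h4
  have := Nat.le_of_dvd (by omega) h4
  omega

lemma char_order : orderOf c = 3 :=
  orderOf_eq_prime (char_cube hχ hπ hc hr hcx) (char_ne_one hχ hπ hc hr hcx)

lemma char_sq_ne_one : c * c ≠ 1 := by
  intro h
  have h1 := char_cube hχ hπ hc hr hcx
  rw [pow_succ, pow_two, h, one_mul] at h1
  exact char_ne_one hχ hπ hc hr hcx h1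

lemma dvd_jac : π ∣ jacobiSum c c := by
  rw [← hr.ker, jacobiSum, map_sum]
  simp only [map_mul, char_res hχ hπ hc hr hcx]
  set k := (Fintype.card F - 1) / 3 with hk
  have h3 := three_dvd hπ hc hr
  have h4 := card_gt (F := F)
  have : ∀ x : F, x ^ k * (1 - x) ^ k =
      ∑ m ∈ Finset.range (k + 1), ((-1) ^ m * (k.choose m : F)) * x ^ (k + m) := by
    intro x
    rw [sub_eq_neg_add, add_pow, Finset.mul_sum]
    refine Finset.sum_congr rfl fun m _ => ?_
    rw [neg_pow, one_pow]
    ring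
  simp only [this]
  rw [Finset.sum_comm]
  refine Finset.sum_eq_zero fun m hm => ?_
  rw [← Finset.mul_sum, FiniteField.sum_pow_lt_card_sub_one, mul_zero]
  rw [Finset.mem_range] at hm
  omega

lemma norm_jac : NmNat (jacobiSum c c) = NmNat π := by
  let c' := c.ringHomComp Zω.subtype
  have hinj : Function.Injective Zω.subtype := Subtype.val_injective
  have h1 : c' ≠ 1 := (MulChar.ringHomComp_ne_one_iff hinj).2 (char_ne_one hχ hπ hc hr hcx)
  have h2 : c' * c' ≠ 1 := by
    rw [← MulChar.ringHomComp_mul]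
    exact (MulChar.ringHomComp_ne_one_iff hinj).2 (char_sq_ne_one hχ hπ hc hr hcx)
  have hch : ringChar ℂ ≠ ringChar F := by
    rw [ringChar.eq_zero]
    exact (CharP.char_ne_zero_of_finite F (ringChar F)).symm
  have h3 := jacobiSum_mul_jacobiSum_inv hch h1 h1 h2
  have h4 : jacobiSum c'⁻¹ c'⁻¹ = (starRingEnd ℂ) (jacobiSum c' c') := by
    rw [jacobiSum, jacobiSum, map_sum]
    refine Finset.sum_congr rfl fun x _ => ?_
    rw [map_mul, ← MulChar.star_apply', ← MulChar.star_apply']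
    rfl
  rw [h4, jacobiSum_ringHomComp, Complex.mul_conj, hr.card] at h3
  have : (NmNat (jacobiSum c c) : ℝ) = NmNat π := by
    rw [coe_NmNat]
    exact_mod_cast h3
  exact_mod_cast this

lemma jac_eq (hp : (3 : Zω) ∣ π - 1) : jacobiSum c c = -π := by
  obtain ⟨u, hu⟩ := dvd_jac hχ hπ hc hr hcx
  have hn := norm_jac hχ hπ hc hr hcx
  rw [hu, NmNat_mul] at hn
  have hn0 : NmNat π ≠ 0 := mt NmNat_eq_zero.1 hπ.ne_zero
  have hu1 : NmNat u = 1 := by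
    have := Nat.pos_of_ne_zero hn0
    nlinarith
  have h3 := char_cube hχ hπ hc hr hcx
  obtain ⟨z, -, hz⟩ := exists_jacobiSum_eq_neg_one_add (by norm_num) h3 h3
    (three_dvd hπ hc hr) omegaZ_prim
  obtain ⟨w, hw⟩ := hp
  have h6 : u + 1 = 0 := by
    refine eq_zero_of_dvd ⟨-z * ωZ - w * u, ?_⟩ (NmNat_add_unit hu1 NmNat_one)
    rw [hu] at hz
    linear_combination hz - u * hw + z * omegaZ_sq
  rw [hu]
  linear_combination π * h6

end

end CubicAux

namespace CubicAux

section
variable {χ : Zω → Zω → Zω} (hχ : IsCubicSymbol χ)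

lemma frob_pow {R R' : Type*} [Field R] [Fintype R] [CommRing R'] (p : ℕ) [Fact p.Prime]
    [CharP R' p] (c : MulChar R R') (ψ : AddChar R R') (n : ℕ) :
    gaussSum c ψ ^ p ^ n = gaussSum (c ^ p ^ n) (ψ ^ p ^ n) := by
  induction n with
  | zero => simp
  | succ n ih => rw [pow_succ, pow_mul, ih, gaussSum_frob, ← pow_mul, ← pow_mul]

include hχ in
lemma half_recip {π ρ : Zω} (hπ : Prime π) (hρ : Prime ρ) (hp : (3 : Zω) ∣ π - 1)
    (hq : (3 : Zω) ∣ ρ - 1) (hn : ¬ ρ ∣ (NmNat π : Zω)) :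
    χ (NmNat ρ : Zω) π * (χ π ρ * χ (NmNat π : Zω) ρ) = 1 := by
  have hcπ := coprime_three hp
  have hcρ := coprime_three hq
  obtain ⟨F, _, _, r, hr⟩ := exists_res hπ
  obtain ⟨K, _, _, s, hs⟩ := exists_res hρ
  obtain ⟨c, hcx⟩ := exists_char hχ hπ hcπ hr
  have hN : ((Fintype.card F : ℕ) : K) ≠ 0 := by
    rw [hr.card]
    intro h
    apply hn
    rw [← hs.ker, map_natCast, h]
  have hch : ringChar K ≠ ringChar F := by
    intro h
    obtain ⟨n, -, hF⟩ := FiniteField.card F (ringChar F)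
    apply hN
    rw [hF, ← h, Nat.cast_pow, ringChar.Nat.cast_ringChar, zero_pow n.ne_zero]
  let ψ := AddChar.FiniteField.primitiveChar F K hch
  let L := CyclotomicField ψ.n K
  let f : Zω →+* L := (algebraMap K L).comp s
  have hfker : ∀ x, f x = 0 ↔ ρ ∣ x := by
    intro x
    rw [← hs.ker]
    exact map_eq_zero_iff _ (algebraMap K L).injective
  let c' : MulChar F L := c.ringHomComp f
  have hc3 : c' ^ 3 = 1 := by
    rw [MulChar.ringHomComp_pow, char_cube hχ hπ hcπ hr hcx, MulChar.ringHomComp_one]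
  have hc1 : c' ≠ 1 := by
    intro h
    apply char_ne_one hχ hπ hcπ hr hcx
    ext1 x
    have h1 := congrArg (fun d : MulChar F L => d x) h
    have hx3 : (c x) ^ 3 = 1 := by
      rw [← MulChar.pow_apply_coe, char_cube hχ hπ hcπ hr hcx, MulChar.one_apply_coe]
    rw [MulChar.one_apply_coe]
    refine cube_eq hρ hcρ hx3 (one_pow 3) ?_
    rw [← hfker, map_sub, map_one, sub_eq_zero]
    simpa [c'] using h1
  have hord : orderOf c' = 3 := orderOf_eq_prime hc3 hc1
  have hNL : ((Fintype.card F : ℕ) : L) ≠ 0 := by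
    intro h
    apply hN
    apply (algebraMap K L).injective
    rw [map_natCast, h, map_zero]
  set g := gaussSum c' ψ.char with hg
  have hg0 : g ≠ 0 := gaussSum_ne_zero_of_nontrivial hNL hc1 ψ.prim
  have hcm : c' (-1) = 1 := by
    have : c (-1) = χ (-1) π := by rw [← hcx]; simp
    simp only [c', MulChar.ringHomComp_apply, this, chi_neg_one hχ hπ hcπ, map_one]
  have hg3 : g ^ 3 = f (-(π * (NmNat π : Zω))) := by
    have h1 := gaussSum_pow_eq_prod_jacobiSum (χ := c') (by rw [hord]; norm_num) ψ.prim
    rw [hord] at h1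
    rw [h1, hcm, show Finset.Ico 1 (3 - 1) = {1} from rfl, Finset.prod_singleton, pow_one,
      jacobiSum_ringHomComp, jac_eq hχ hπ hcπ hr hcx hp, hr.card, map_neg, map_neg, map_mul,
      map_natCast]
    ring
  -- Frobenius
  obtain ⟨n, hprime, hK⟩ := FiniteField.card K (ringChar K)
  have : Fact (ringChar K).Prime := ⟨hprime⟩
  have : CharP L (ringChar K) := charP_of_injective_algebraMap (algebraMap K L).injective _
  have hfrob := frob_pow (ringChar K) c' ψ.char n
  rw [← hK, ← hg] at hfrob
  have h3 := three_dvd hρ hcρ hs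
  have hpos := card_gt (F := K)
  obtain ⟨k, hk⟩ := h3
  have hk' : (Fintype.card K - 1) / 3 = k := by omega
  have hcK : Fintype.card K = 3 * k + 1 := by omega
  have hcpow : c' ^ Fintype.card K = c' := by
    rw [hcK, pow_succ, pow_mul, hc3, one_pow, one_mul]
  have hunit : IsUnit ((Fintype.card K : ℕ) : F) := by
    rw [isUnit_iff_ne_zero]
    intro h
    rw [hK, Nat.cast_pow] at h
    have h := pow_eq_zero_iff n.ne_zero |>.1 h
    have h' := ringChar.dvd h
    have hpF : (ringChar F).Prime := CharP.char_is_prime F _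
    exact hch ((Nat.prime_dvd_prime_iff_eq hpF hprime).1 h').symm
  rw [hcpow, AddChar.pow_mulShift] at hfrob
  have hsh := gaussSum_mulShift c' ψ.char hunit.unit
  rw [IsUnit.unit_spec, ← hfrob, ← hg] at hsh
  -- combine
  have h5 : c' ((Fintype.card K : ℕ) : F) * (g ^ 3) ^ k = 1 := by
    apply mul_right_cancel₀ hg0
    rw [one_mul]
    conv_rhs => rw [← hsh]
    rw [hcK]
    ring
  have h6 : c' ((Fintype.card K : ℕ) : F) = f (χ (NmNat ρ : Zω) π) := by
    have : ((Fintype.card K : ℕ) : F) = r (NmNat ρ : Zω) := by rw [hs.card, map_natCast]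
    simp only [c', MulChar.ringHomComp_apply]
    rw [this, hcx]
  have h7 : (g ^ 3) ^ k = f (χ (-(π * (NmNat π : Zω))) ρ) := by
    rw [hg3]
    simp only [f, RingHom.comp_apply]
    rw [chi_res hχ hρ hcρ hs, hk', map_pow]
  have h8 : χ (-(π * (NmNat π : Zω))) ρ = χ π ρ * χ (NmNat π : Zω) ρ := by
    rw [neg_eq_neg_one_mul, hχ.2.1, hχ.2.1, chi_neg_one hχ hρ hcρ, one_mul]
  rw [h6, h7, h8, ← map_mul] at h5
  have hρπ : ¬ ρ ∣ π := by
    intro h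
    apply hn
    rw [← mul_cj]
    exact h.mul_right _
  have hπρ : ¬ π ∣ (NmNat ρ : Zω) := by
    rw [← hr.ker, map_natCast, ← hs.card]
    exact hunit.ne_zero
  refine cube_eq hρ hcρ ?_ (one_pow 3) ?_
  · rw [mul_pow, mul_pow, chi_cube hχ hρ hcρ hρπ, chi_cube hχ hρ hcρ hn, chi_cube hχ hπ hcπ hπρ]
    norm_num
  · rw [← hfker, map_sub, h5, map_one, sub_self]

end

end CubicAux

namespace CubicAux

lemma exists_xyZ (a : Zω) : ∃ x y : ℤ, a = x + y * ωZ := by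
  obtain ⟨x, y, h⟩ := exists_xy a
  exact ⟨x, y, Subtype.ext (by simpa [ωZ] using h)⟩

lemma NmNat_xy (x y : ℤ) : (NmNat ((x : Zω) + y * ωZ) : ℤ) = x ^ 2 - x * y + y ^ 2 := by
  have h1 : (NmNat ((x : Zω) + y * ωZ) : ℝ) = ((x ^ 2 - x * y + y ^ 2 : ℤ) : ℝ) := by
    rw [coe_NmNat]
    have := normSq_xy x y
    simp only [ωZ]
    push_cast at this ⊢
    exact this
  exact_mod_cast h1

lemma primary_norm {c : Zω} (hc : (3 : Zω) ∣ c - 1) : ¬ (3 : ℤ) ∣ NmNat c := by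
  obtain ⟨w, hw⟩ := hc
  obtain ⟨x, y, rfl⟩ := exists_xyZ w
  have : c = ((1 + 3 * x : ℤ) : Zω) + ((3 * y : ℤ) : Zω) * ωZ := by
    push_cast; linear_combination hw
  rw [this, NmNat_xy]
  have : (1 + 3 * x) ^ 2 - (1 + 3 * x) * (3 * y) + (3 * y) ^ 2
    = 3 * (2 * x + 3 * x ^ 2 - y * (1 + 3 * x) + 3 * y ^ 2) + 1 := by ring
  rw [this]
  omega

lemma exists_primary {p : Zω} (hp : ¬ (3 : ℤ) ∣ NmNat p) :
    ∃ u v : Zω, u * v = 1 ∧ (3 : Zω) ∣ u * p - 1 := by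
  obtain ⟨x, y, rfl⟩ := exists_xyZ p
  rw [NmNat_xy] at hp
  have hw := omegaZ_sq
  obtain ⟨m, i, hx, hi⟩ : ∃ m i : ℤ, x = 3 * m + i ∧ (i = 0 ∨ i = 1 ∨ i = 2) :=
    ⟨x / 3, x % 3, by omega, by omega⟩
  obtain ⟨n, j, hy, hj⟩ : ∃ n j : ℤ, y = 3 * n + j ∧ (j = 0 ∨ j = 1 ∨ j = 2) :=
    ⟨y / 3, y % 3, by omega, by omega⟩
  subst hx hy
  have hij : ¬ (3 : ℤ) ∣ i ^ 2 - i * j + j ^ 2 := by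
    intro h
    apply hp
    have : (3 * m + i) ^ 2 - (3 * m + i) * (3 * n + j) + (3 * n + j) ^ 2 =
      3 * (3 * m ^ 2 + 2 * m * i - 3 * m * n - m * j - i * n + 3 * n ^ 2 + 2 * n * j) +
        (i ^ 2 - i * j + j ^ 2) := by ring
    rw [this]
    exact dvd_add (dvd_mul_right _ _) h
  have hw3 : ωZ * ωZ ^ 2 = 1 := by
    linear_combination omegaZ_prim.pow_eq_one
  rcases hi with rfl | rfl | rfl <;> rcases hj with rfl | rfl | rfl
  · exact absurd (by norm_num) hij
  · refine ⟨ωZ ^ 2, ωZ, by linear_combination hw3, ωZ ^ 2 * (m + n * ωZ), ?_⟩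
    push_cast; linear_combination hw3
  · refine ⟨-ωZ ^ 2, -ωZ, by linear_combination hw3, -ωZ ^ 2 * (m + n * ωZ) - 1, ?_⟩
    push_cast; linear_combination (-2) * hw3
  · refine ⟨1, 1, by ring, m + n * ωZ, ?_⟩
    push_cast; ring
  · refine ⟨-ωZ, -ωZ ^ 2, by linear_combination hw3, -ωZ * (m + n * ωZ), ?_⟩
    push_cast; linear_combination (-1) * hw
  · exact absurd (by norm_num) hij
  · refine ⟨-1, -1, by ring, -(m + n * ωZ) - 1, ?_⟩
    push_cast; ring
  · exact absurd (by norm_num) hij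
  · refine ⟨ωZ, ωZ ^ 2, by linear_combination hw3, ωZ * (m + n * ωZ) - 1, ?_⟩
    push_cast; linear_combination 2 * hw

lemma primary_induction {P : Zω → Prop} (h1 : P 1)
    (hm : ∀ π c : Zω, Prime π → (3 : Zω) ∣ π - 1 → (3 : Zω) ∣ c - 1 → P c → P (π * c))
    (c : Zω) (hc : (3 : Zω) ∣ c - 1) : P c := by
  induction hN : NmNat c using Nat.strong_induction_on generalizing c with
  | _ N ih =>
    by_cases hu : IsUnit c
    · rw [unit_eq_one hu hc]; exact h1
    have hc3 := primary_norm hc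
    have hc0 : c ≠ 0 := by
      rintro rfl
      rw [NmNat_eq_zero.2 rfl] at hc3
      simp at hc3
    obtain ⟨p, hp, d, hd⟩ := WfDvdMonoid.exists_irreducible_factor hu hc0
    have hp3 : ¬ (3 : ℤ) ∣ NmNat p := by
      intro h
      apply hc3
      rw [hd, NmNat_mul]
      push_cast
      exact h.mul_right _
    obtain ⟨u, v, huv, hup⟩ := exists_primary hp3
    have hcd : c = (u * p) * (v * d) := by linear_combination hd - p * d * huv
    have hd3 : (3 : Zω) ∣ v * d - 1 := by
      have : v * d - 1 = (c - 1) - (u * p - 1) * (v * d) := by linear_combination -hcd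
      rw [this]
      exact dvd_sub hc (hup.mul_right _)
    have hunit : IsUnit u := IsUnit.of_mul_eq_one _ huv
    have hirr : Irreducible (u * p) := (irreducible_isUnit_mul hunit).2 hp
    rw [hcd]
    refine hm _ _ hirr.prime hup hd3 (ih (NmNat (v * d)) ?_ _ hd3 rfl)
    rw [← hN, hcd, NmNat_mul (u * p)]
    have h5 : NmNat (u * p) ≠ 1 := fun h => hirr.not_isUnit (isUnit_iff.2 h)
    have h6 : NmNat (u * p) ≠ 0 := fun h => hirr.ne_zero (NmNat_eq_zero.1 h)
    have h7 : NmNat (v * d) ≠ 0 := by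
      intro h
      rw [NmNat_eq_zero] at h
      rw [h, mul_zero] at hcd
      exact hc0 hcd
    have h8 : 0 < NmNat (v * d) := Nat.pos_of_ne_zero h7
    have h9 : 2 ≤ NmNat (u * p) := by omega
    nlinarith

lemma cj_mul (a b : Zω) : cj (a * b) = cj a * cj b := Subtype.ext (by simp [cj])
lemma cj_cj (a : Zω) : cj (cj a) = a := Subtype.ext (by simp [cj])

lemma cj_dvd {a b : Zω} (h : a ∣ b) : cj a ∣ cj b := by
  obtain ⟨c, rfl⟩ := h
  exact ⟨cj c, cj_mul _ _⟩

lemma cj_primary {a : Zω} (h : (3 : Zω) ∣ a - 1) : (3 : Zω) ∣ cj a - 1 := by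
  obtain ⟨w, hw⟩ := h
  refine ⟨cj w, Subtype.ext ?_⟩
  have h3 : ((3 : Zω) : ℂ) = 3 := rfl
  have h1 : (a : ℂ) = 1 + 3 * w := by
    have := congrArg Subtype.val hw
    push_cast at this
    rw [h3] at this
    linear_combination this
  simp only [cj, h1, AddSubgroupClass.coe_sub, Subring.coe_mul, h3, map_add, map_mul, map_one,
    Subring.coe_one, map_ofNat]
  ring

lemma primary_eq {π ρ : Zω} (hπ : Irreducible π) (hρ : ¬ IsUnit ρ) (hp : (3 : Zω) ∣ π - 1)
    (hq : (3 : Zω) ∣ ρ - 1) (h : ρ ∣ π) : π = ρ := by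
  obtain ⟨u, hu⟩ := h
  have hun : IsUnit u := (hπ.isUnit_or_isUnit hu).resolve_left hρ
  have : u = 1 := by
    apply unit_eq_one hun
    have : u - 1 = (π - 1) - (ρ - 1) * u := by linear_combination -hu
    rw [this]
    exact dvd_sub hp (hq.mul_right _)
  rw [hu, this, mul_one]

lemma not_dvd_norm {π ρ : Zω} (hπ : Prime π) (hρ : Prime ρ) (hp : (3 : Zω) ∣ π - 1)
    (hq : (3 : Zω) ∣ ρ - 1) (h1 : π ≠ ρ) (h2 : π ≠ cj ρ) : ¬ ρ ∣ (NmNat π : Zω) := by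
  rw [← mul_cj]
  intro h
  rcases hρ.dvd_or_dvd h with h | h
  · exact h1 (primary_eq hπ.irreducible hρ.not_isUnit hp hq h)
  · have h := cj_dvd h
    rw [cj_cj] at h
    refine h2 (primary_eq hπ.irreducible ?_ hp (cj_primary hq) h)
    intro hu
    apply hρ.not_isUnit
    rw [← cj_cj ρ]
    exact isUnit_of_dvd_one (by
      have := cj_dvd hu.dvd (b := 1)
      rwa [show cj 1 = 1 from Subtype.ext (by simp [cj])] at this)

section
variable {χ : Zω → Zω → Zω} (hχ : IsCubicSymbol χ)

include hχ

lemma good_recip {π ρ : Zω} (hπ : Prime π) (hρ : Prime ρ) (hp : (3 : Zω) ∣ π - 1)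
    (hq : (3 : Zω) ∣ ρ - 1) (h1 : π ≠ ρ) (h2 : π ≠ cj ρ) : χ π ρ = χ ρ π := by
  have hA := half_recip hχ hπ hρ hp hq (not_dvd_norm hπ hρ hp hq h1 h2)
  have hB := half_recip hχ hρ hπ hq hp (not_dvd_norm hρ hπ hq hp h1.symm
    (fun h => h2 (by rw [h, cj_cj])))
  have h3 : χ (NmNat ρ : Zω) π * χ (NmNat π : Zω) ρ ≠ 0 := by
    intro h
    have : (0 : Zω) = 1 := by linear_combination hA - (χ π ρ) * h
    exact zero_ne_one this
  apply mul_left_cancel₀ h3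
  linear_combination hA - hB

lemma gen_one {c : Zω} (hc : (3 : Zω) ∣ c - 1) : χ 1 c = 1 := by
  refine primary_induction (P := fun c => χ 1 c = 1) (hχ.2.2.1 1) ?_ c hc
  intro π c hπ hp _ ih
  rw [hχ.1, ih, chi_one hχ hπ (coprime_three hp), mul_one]

lemma gen_neg_one {c : Zω} (hc : (3 : Zω) ∣ c - 1) : χ (-1) c = 1 := by
  refine primary_induction (P := fun c => χ (-1) c = 1) (hχ.2.2.1 _) ?_ c hc
  intro π c hπ hp _ ih
  rw [hχ.1, ih, chi_neg_one hχ hπ (coprime_three hp), mul_one]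

lemma gen_congr {c : Zω} (hc : (3 : Zω) ∣ c - 1) {a b : Zω} (h : c ∣ a - b) : χ a c = χ b c := by
  revert h
  refine primary_induction (P := fun c => c ∣ a - b → χ a c = χ b c) ?_ ?_ c hc
  · intro _; rw [hχ.2.2.1, hχ.2.2.1]
  intro π c hπ hp _ ih h
  rw [hχ.1, hχ.1, ih (dvd_of_mul_left_dvd h),
    chi_congr hχ hπ (coprime_three hp) (dvd_of_mul_right_dvd h)]

lemma gen_cube {c : Zω} (hc : (3 : Zω) ∣ c - 1) {a : Zω} (h : IsCoprime a c) : χ a c ^ 3 = 1 := by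
  revert h
  refine primary_induction (P := fun c => IsCoprime a c → χ a c ^ 3 = 1) ?_ ?_ c hc
  · intro _; rw [hχ.2.2.1, one_pow]
  intro π c hπ hp _ ih h
  rw [hχ.1, mul_pow, ih h.of_mul_right_right, chi_cube hχ hπ (coprime_three hp), mul_one]
  intro hd
  exact hπ.not_isUnit (h.isUnit_of_dvd' hd (dvd_mul_right _ _))

lemma recip_of_primes {a c : Zω} (ha : (3 : Zω) ∣ a - 1) (hc : (3 : Zω) ∣ c - 1)
    (h : ∀ ρ : Zω, Prime ρ → (3 : Zω) ∣ ρ - 1 → ρ ∣ c → χ a ρ = χ ρ a) : χ a c = χ c a := by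
  revert h
  refine primary_induction (P := fun c => (∀ ρ : Zω, Prime ρ → (3 : Zω) ∣ ρ - 1 → ρ ∣ c →
    χ a ρ = χ ρ a) → χ a c = χ c a) ?_ ?_ c hc
  · intro _; rw [hχ.2.2.1, gen_one hχ ha]
  intro π c hπ hp _ ih h
  rw [hχ.1, hχ.2.1, ih fun ρ h1 h2 h3 => h ρ h1 h2 (h3.mul_left _), h π hπ hp (dvd_mul_right _ _)]

lemma prime_recip {π ρ : Zω} (hπ : Prime π) (hρ : Prime ρ) (hp : (3 : Zω) ∣ π - 1)
    (hq : (3 : Zω) ∣ ρ - 1) (h1 : π ≠ ρ) : χ π ρ = χ ρ π := by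
  by_cases h2 : π = cj ρ
  swap
  · exact good_recip hχ hπ hρ hp hq h1 h2
  obtain ⟨t, ht⟩ : ∃ t, t = -(π + ρ) := ⟨_, rfl⟩
  have ht3 : (3 : Zω) ∣ t - 1 := by
    have : t - 1 = -(π - 1) - (ρ - 1) - 3 * 1 := by rw [ht]; ring
    rw [this]
    exact dvd_sub (dvd_sub (dvd_neg.2 hp) hq) (dvd_mul_right _ _)
  have hA : χ π t = χ t π := by
    refine recip_of_primes hχ hp ht3 fun σ hσ hs hd => ?_
    refine good_recip hχ hπ hσ hp hs ?_ ?_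
    · rintro rfl
      apply h1
      refine (primary_eq hρ.irreducible hπ.not_isUnit hq hp ?_).symm
      have : ρ = -t - π := by rw [ht]; ring
      rw [this]
      exact dvd_sub (dvd_neg.2 hd) dvd_rfl
    · intro h
      have hσρ : σ = ρ := by rw [← cj_cj σ, ← h, h2, cj_cj]
      subst hσρ
      apply h1
      refine primary_eq hπ.irreducible hσ.not_isUnit hp hs ?_
      have : π = -t - σ := by rw [ht]; ring
      rw [this]
      exact dvd_sub (dvd_neg.2 hd) dvd_rfl
  have hB : χ ρ t = χ t ρ := by
    refine recip_of_primes hχ hq ht3 fun σ hσ hs hd => ?_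
    refine good_recip hχ hρ hσ hq hs ?_ ?_
    · rintro rfl
      apply h1
      refine primary_eq hπ.irreducible hσ.not_isUnit hp hs ?_
      have : π = -t - ρ := by rw [ht]; ring
      rw [this]
      exact dvd_sub (dvd_neg.2 hd) dvd_rfl
    · intro h
      have hσπ : σ = π := by rw [← cj_cj σ, ← h, h2]
      subst hσπ
      apply h1
      refine (primary_eq hρ.irreducible hσ.not_isUnit hq hs ?_).symm
      have : ρ = -t - σ := by rw [ht]; ring
      rw [this]
      exact dvd_sub (dvd_neg.2 hd) dvd_rfl
  have e1 : χ t ρ = χ π ρ := by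
    rw [gen_congr hχ hq (a := t) (b := -1 * π) ⟨-1, by rw [ht]; ring⟩, hχ.2.1,
      gen_neg_one hχ hq, one_mul]
  have e2 : χ t π = χ ρ π := by
    rw [gen_congr hχ hp (a := t) (b := -1 * ρ) ⟨-1, by rw [ht]; ring⟩, hχ.2.1,
      gen_neg_one hχ hp, one_mul]
  have e3 : χ π t = χ ρ t := by
    rw [gen_congr hχ ht3 (a := π) (b := -1 * ρ) ⟨-1, by rw [ht]; ring⟩, hχ.2.1,
      gen_neg_one hχ ht3, one_mul]
  rw [← e1, ← e2, ← hA, ← hB, e3]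

/-- Cubic reciprocity. -/
lemma recip {a b : Zω} (ha : (3 : Zω) ∣ a - 1) (hb : (3 : Zω) ∣ b - 1) (hab : IsCoprime a b) :
    χ a b = χ b a := by
  refine recip_of_primes hχ ha hb fun ρ hρ hr hd => ?_
  refine (recip_of_primes hχ hr ha fun σ hσ hs he => ?_).symm
  refine prime_recip hχ hρ hσ hr hs ?_
  rintro rfl
  exact hρ.not_isUnit (hab.isUnit_of_dvd' he hd)

end

lemma eE_add (z w : ℂ) : eE (z + w) = eE z * eE w := by
  unfold eE
  rw [← Complex.exp_add, map_add]
  congr 1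
  ring

lemma eE_coe (k : Zω) : eE (k : ℂ) = 1 := by
  obtain ⟨x, y, h⟩ := exists_xy k
  unfold eE
  rw [Complex.exp_eq_one_iff]
  refine ⟨2 * x - y, ?_⟩
  rw [h]
  simp [conj_omega]
  ring

lemma conj_cube {v : Zω} (hv : v ^ 3 = 1) : (starRingEnd ℂ) (v : ℂ) = (v : ℂ) * v := by
  have h3 : (v : ℂ) ^ 3 = 1 := by exact_mod_cast congrArg Subtype.val hv
  have h0 : (v : ℂ) ≠ 0 := by
    intro h; rw [h] at h3; norm_num at h3
  have h1 : ‖(v : ℂ)‖ = 1 := Complex.norm_eq_one_of_pow_eq_one h3 (by norm_num)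
  apply mul_left_cancel₀ h0
  rw [Complex.mul_conj, Complex.normSq_eq_norm_sq, h1]
  push_cast
  linear_combination -h3

end CubicAux

open CubicAux in
open Complex in
/-- twisted multiplicativity of the cubic Gauss sum:
for `a ≡ b ≡ 1 (mod 3)` coprime, `g(ab) = conj((a/b)₃) g(a) g(b)`. -/
theorem gauss_twisted_mul (χ : Zω → Zω → Zω) (hχ : IsCubicSymbol χ)
    (a b : Zω) (ha : (3 : Zω) ∣ (a - 1)) (hb : (3 : Zω) ∣ (b - 1))
    (hab : IsCoprime a b) :
    gauss χ 1 (a * b) = (starRingEnd ℂ) ((χ a b : Zω) : ℂ) * gauss χ 1 a * gauss χ 1 b := by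
  classical
  have hab3 : (3 : Zω) ∣ a * b - 1 := by
    have : a * b - 1 = (a - 1) * b + (b - 1) := by ring
    rw [this]
    exact dvd_add (ha.mul_right _) hb
  have hne : ∀ c : Zω, (3 : Zω) ∣ c - 1 → c ≠ 0 := by
    rintro c hc rfl
    have := primary_norm hc
    rw [NmNat_eq_zero.2 rfl] at this
    simp at this
  have ha0 := hne a ha
  have hb0 := hne b hb
  have ha0' : (a : ℂ) ≠ 0 := by simpa using ha0
  have hb0' : (b : ℂ) ≠ 0 := by simpa using hb0
  have := finite_quot ha0
  have := finite_quot hb0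
  have := finite_quot (mul_ne_zero ha0 hb0)
  let := Fintype.ofFinite (Zω ⧸ Ideal.span {a})
  let := Fintype.ofFinite (Zω ⧸ Ideal.span {b})
  let := Fintype.ofFinite (Zω ⧸ Ideal.span {a * b})
  have hmk : ∀ c x y : Zω, (Ideal.Quotient.mk (Ideal.span {c}) x = Ideal.Quotient.mk _ y) ↔
      c ∣ x - y := by
    intro c x y
    rw [Ideal.Quotient.eq, Ideal.mem_span_singleton]
  have hout : ∀ (c : Zω) (q : Zω ⧸ Ideal.span {c}),
      Ideal.Quotient.mk (Ideal.span {c}) (Quotient.out q) = q := by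
    intro c q
    exact Quotient.out_eq q
  let Φ : (Zω ⧸ Ideal.span {a}) × (Zω ⧸ Ideal.span {b}) → Zω ⧸ Ideal.span {a * b} :=
    fun p => Ideal.Quotient.mk _ (b * Quotient.out p.1 + a * Quotient.out p.2)
  have hΦ : Function.Bijective Φ := by
    constructor
    · rintro ⟨x, y⟩ ⟨x', y'⟩ h
      have h := (hmk _ _ _).1 h
      have h1 : a ∣ Quotient.out x - Quotient.out x' := by
        refine hab.dvd_of_dvd_mul_left ?_
        have h2 := dvd_of_mul_right_dvd h
        have : b * (Quotient.out x - Quotient.out x') =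
          (b * Quotient.out x + a * Quotient.out y - (b * Quotient.out x' + a * Quotient.out y'))
            - a * (Quotient.out y - Quotient.out y') := by ring
        rw [this]
        exact dvd_sub h2 (dvd_mul_right _ _)
      have h3 : b ∣ Quotient.out y - Quotient.out y' := by
        refine hab.symm.dvd_of_dvd_mul_left ?_
        have h2 := dvd_of_mul_left_dvd h
        have : a * (Quotient.out y - Quotient.out y') =
          (b * Quotient.out x + a * Quotient.out y - (b * Quotient.out x' + a * Quotient.out y'))
            - b * (Quotient.out x - Quotient.out x') := by ring
        rw [this]
        exact dvd_sub h2 (dvd_mul_right _ _)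
      rw [← hmk, hout, hout] at h1 h3
      rw [h1, h3]
    · intro q
      obtain ⟨d, rfl⟩ := Ideal.Quotient.mk_surjective q
      obtain ⟨u, v, huv⟩ := hab
      refine ⟨(Ideal.Quotient.mk _ (v * d), Ideal.Quotient.mk _ (u * d)), ?_⟩
      refine (hmk _ _ _).2 ?_
      obtain ⟨s, hs⟩ := (hmk _ _ _).1 (hout a (Ideal.Quotient.mk _ (v * d)))
      obtain ⟨t, ht⟩ := (hmk _ _ _).1 (hout b (Ideal.Quotient.mk _ (u * d)))
      refine ⟨s + t, ?_⟩
      linear_combination b * hs + a * ht + d * huv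
  unfold gauss
  rw [tsum_fintype, tsum_fintype, tsum_fintype, mul_assoc, Finset.sum_mul_sum,
    ← Finset.sum_product', Finset.univ_product_univ, Finset.mul_sum,
    ← (Equiv.ofBijective Φ hΦ).sum_comp]
  refine Finset.sum_congr rfl ?_
  rintro ⟨x, y⟩ -
  simp only [Equiv.ofBijective_apply, one_mul]
  obtain ⟨k, hk⟩ := (hmk _ _ _).1 (hout (a * b) (Φ (x, y)))
  set d := Quotient.out (Φ (x, y)) with hd
  set X := Quotient.out x
  set Y := Quotient.out y
  have hk : d = b * X + a * Y + a * b * k := by linear_combination hk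
  have h1 : χ d (a * b) = (χ a b * χ a b) * (χ X a * χ Y b) := by
    rw [hχ.1, gen_congr hχ ha (a := d) (b := b * X) ⟨Y + b * k, by rw [hk]; ring⟩,
      gen_congr hχ hb (a := d) (b := a * Y) ⟨X + a * k, by rw [hk]; ring⟩, hχ.2.1, hχ.2.1,
      ← recip hχ ha hb hab]
    ring
  have h2 : eE ((d : ℂ) / ((a * b : Zω) : ℂ)) = eE ((X : ℂ) / a) * eE ((Y : ℂ) / b) := by
    have : (d : ℂ) / ((a * b : Zω) : ℂ) = (X : ℂ) / a + (Y : ℂ) / b + k := by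
      rw [hk]
      push_cast
      field_simp
    rw [this, eE_add, eE_add, eE_coe, mul_one]
  rw [h1, h2, conj_cube (gen_cube hχ hb hab)]
  push_cast
  ring
end

section
/- Let π, r ∈ ℤ[ω] with π a prime, π ≡ r ≡ 1 (mod 3), gcd(π,r)=1, and let k > 0, j ≥ 0 be integers with k ≠ j+1. Then g(rπ^j, π^k) = φ(π^k) if 3 divides k and k ≤ j, and g(rπ^j, π^k) = 0 otherwise. -/
open Complex

theorem om_sq : ω ^ 2 + ω + 1 = 0 := by
  have h : IsPrimitiveRoot ω 3 := by
    have := Complex.isPrimitiveRoot_exp 3 (by norm_num)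
    simpa [ω] using this
  have := h.geom_sum_eq_zero (by norm_num)
  simp [Finset.sum_range_succ] at this
  linear_combination this

theorem om_cube : ω ^ 3 = 1 := by linear_combination (ω - 1) * om_sq

theorem om_conj : (starRingEnd ℂ) ω = ω ^ 2 := by
  rw [ω, ← Complex.exp_conj, ← Complex.exp_nat_mul, Complex.exp_eq_exp_iff_exists_int]
  refine ⟨-1, ?_⟩
  have h2 : (starRingEnd ℂ) 2 = 2 := Complex.conj_ofNat 2
  have h3 : (starRingEnd ℂ) 3 = 3 := Complex.conj_ofNat 3
  simp [h2, h3]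
  ring

theorem omZ_sq : ωZ ^ 2 + ωZ + 1 = 0 := by
  apply Subtype.ext
  simpa [ωZ] using om_sq

theorem om_im : ω.im ≠ 0 := by
  intro h
  have h1 : (starRingEnd ℂ) ω = ω := Complex.conj_eq_iff_im.2 h
  have h2 := om_sq
  rw [← om_conj, h1] at h2
  have h3 : ω = -1/2 := by linear_combination h2/2
  have h4 := om_sq
  rw [h3] at h4
  norm_num at h4

theorem Zw_rep (x : Zω) : ∃ a b : ℤ, x = a + b * ωZ := by
  obtain ⟨x, hx⟩ := x
  have : ∃ a b : ℤ, x = a + b * ω := by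
    unfold Zω at hx
    induction hx using Subring.closure_induction with
    | mem x hx => exact ⟨0, 1, by simpa using hx⟩
    | zero => exact ⟨0, 0, by simp⟩
    | one => exact ⟨1, 0, by simp⟩
    | add x y _ _ h1 h2 =>
      obtain ⟨a, b, rfl⟩ := h1
      obtain ⟨c, d, rfl⟩ := h2
      exact ⟨a + c, b + d, by push_cast; ring⟩
    | neg x _ h1 =>
      obtain ⟨a, b, rfl⟩ := h1
      exact ⟨-a, -b, by push_cast; ring⟩
    | mul x y _ _ h1 h2 =>
      obtain ⟨a, b, rfl⟩ := h1
      obtain ⟨c, d, rfl⟩ := h2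
      exact ⟨a * c - b * d, a * d + b * c - b * d, by
        push_cast; linear_combination (b * d : ℂ) * om_sq⟩
  obtain ⟨a, b, h⟩ := this
  refine ⟨a, b, Subtype.ext ?_⟩
  simpa [ωZ] using h

theorem Zw_unique (a b : ℤ) (h : (a : ℂ) + b * ω = 0) : a = 0 ∧ b = 0 := by
  have h1 := congrArg Complex.im h
  simp [om_im] at h1
  subst h1
  simpa using h

theorem bas_li : LinearIndependent ℤ ![(1 : Zω), ωZ] := by
  rw [LinearIndependent.pair_iff]
  intro s t h
  apply Zw_unique
  have := congrArg (Subtype.val) h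
  simpa [ωZ] using this

theorem bas_sp : ⊤ ≤ Submodule.span ℤ (Set.range ![(1 : Zω), ωZ]) := by
  intro x _
  obtain ⟨a, b, rfl⟩ := Zw_rep x
  simp only [Matrix.range_cons, Matrix.range_empty, Set.union_empty, Set.singleton_union]
  rw [Submodule.mem_span_pair]
  exact ⟨a, b, by simp⟩

noncomputable def bas : Module.Basis (Fin 2) ℤ Zω := Module.Basis.mk bas_li bas_sp

theorem bas0 : bas 0 = 1 := by simp [bas]
theorem bas1 : bas 1 = ωZ := by simp [bas]

theorem bas_repr (a b : ℤ) (x : Zω) (h : x = a + b * ωZ) :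
    bas.repr x 0 = a ∧ bas.repr x 1 = b := by
  have : x = a • bas 0 + b • bas 1 := by rw [h, bas0, bas1]; simp
  rw [this]
  constructor <;> simp only [map_add, map_smul, Module.Basis.repr_self] <;> simp

instance : Module.Free ℤ Zω := Module.Free.of_basis bas
instance : Module.Finite ℤ Zω := Module.Finite.of_basis bas

theorem norm_eq (a b : ℤ) : Algebra.norm ℤ ((a : Zω) + b * ωZ) = a ^ 2 - a * b + b ^ 2 := by
  rw [Algebra.norm_eq_matrix_det bas, Matrix.det_fin_two]
  simp only [Algebra.leftMulMatrix_eq_repr_mul, bas0, bas1]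
  obtain ⟨h1, h2⟩ := bas_repr a b (((a : Zω) + b * ωZ) * 1) (by ring)
  obtain ⟨h3, h4⟩ := bas_repr (-b) (a - b) (((a : Zω) + b * ωZ) * ωZ)
    (by push_cast; linear_combination (b : Zω) * omZ_sq)
  rw [h1, h2, h3, h4]; ring

theorem normSq_eq (a b : ℤ) : Complex.normSq (((a : Zω) + b * ωZ : Zω) : ℂ) =
    ((a ^ 2 - a * b + b ^ 2 : ℤ) : ℝ) := by
  have : (Complex.normSq (((a : Zω) + b * ωZ : Zω) : ℂ) : ℂ) =
    ((a ^ 2 - a * b + b ^ 2 : ℤ) : ℂ) := by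
    rw [← Complex.mul_conj]
    simp [ωZ, om_conj]
    linear_combination (a * b : ℂ) * om_sq + (b^2 : ℂ) * om_cube
  exact_mod_cast this

theorem nmNat_eq (x : Zω) : NmNat x = (Algebra.norm ℤ x).natAbs := by
  obtain ⟨a, b, rfl⟩ := Zw_rep x
  rw [NmNat, normSq_eq, norm_eq]
  have : 0 ≤ a ^ 2 - a * b + b ^ 2 := by nlinarith [sq_nonneg (a - b), sq_nonneg a, sq_nonneg b]
  obtain ⟨n, hn⟩ := Int.eq_ofNat_of_zero_le this
  rw [hn]
  simp

theorem card_quot (x : Zω) (hx : x ≠ 0) : Nat.card (Zω ⧸ Ideal.span {x}) = NmNat x := by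
  rw [nmNat_eq]
  rw [Algebra.norm_apply]
  have h := Submodule.natAbs_det_equiv ((Ideal.span {x}).restrictScalars ℤ)
    (bas.equiv (Ideal.basisSpanSingleton bas hx) (Equiv.refl _))
  refine Eq.trans h.symm ?_
  congr 2
  refine bas.ext fun i => ?_
  have h2 := Module.Basis.equiv_apply (b := bas) i
    (Ideal.basisSpanSingleton bas hx) (Equiv.refl _)
  exact (congrArg Subtype.val h2).trans (by simp)

theorem om_six : (ω ^ 2) ^ 3 = 1 := by
  linear_combination (ω ^ 3 + 1) * om_cube

theorem finq (c : Zω) (hc : c ≠ 0) : Finite (Zω ⧸ Ideal.span {c}) :=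
  Ideal.finiteQuotientOfFreeOfNeBot _ (by simpa using hc)

theorem span_max (π : Zω) (hπ : Prime π) : (Ideal.span {π}).IsMaximal := by
  have := finq π hπ.ne_zero
  have : (Ideal.span {π}).IsPrime := (Ideal.span_singleton_prime hπ.ne_zero).2 hπ
  exact Ideal.Quotient.maximal_of_isField _ (Finite.isField_of_domain _)

theorem cop_of_not_dvd (π : Zω) (hπ : Prime π) (a : Zω) (ha : ¬ π ∣ a) : IsCoprime π a := by
  have := span_max π hπ
  obtain ⟨b, i, hi, h⟩ := this.exists_inv (x := a) (by rwa [Ideal.mem_span_singleton])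
  rw [Ideal.mem_span_singleton] at hi
  obtain ⟨s, rfl⟩ := hi
  exact ⟨s, b, by linear_combination h⟩

theorem cop_three (π : Zω) (hπ1 : (3 : Zω) ∣ (π - 1)) : IsCoprime π 3 := by
  obtain ⟨s, hs⟩ := hπ1
  exact ⟨1, -s, by linear_combination hs⟩

theorem chi_pow (χ : Zω → Zω → Zω) (hχ : IsCubicSymbol χ) (a π : Zω) (k : ℕ) :
    χ a (π ^ k) = χ a π ^ k := by
  induction k with
  | zero => simpa using hχ.2.2.1 a
  | succ k ih => rw [pow_succ, hχ.1, ih, pow_succ]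

theorem roots_eq (π u v : Zω) (hπ : Prime π) (h3 : IsCoprime π 3)
    (hu : (u : ℂ) = 1 ∨ (u : ℂ) = ω ∨ (u : ℂ) = ω ^ 2)
    (hv : (v : ℂ) = 1 ∨ (v : ℂ) = ω ∨ (v : ℂ) = ω ^ 2) (h : π ∣ u - v) : u = v := by
  by_contra hne
  have key : (u - v) * (u ^ 2 - v ^ 2) = 3 := by
    apply Subtype.ext
    have hne' : (u : ℂ) ≠ v := fun h => hne (Subtype.ext h)
    change ((u : ℂ) - v) * ((u : ℂ) ^ 2 - (v : ℂ) ^ 2) = 3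
    rcases hu with hu | hu | hu <;> rcases hv with hv | hv | hv <;> rw [hu, hv] at hne' ⊢ <;>
      first
      | exact absurd rfl hne'
      | linear_combination om_cube - om_sq
      | linear_combination (2 - ω) * om_cube - om_sq
      | linear_combination (2 - ω ^ 2) * om_cube - om_sq
      | linear_combination (ω ^ 3 + 1 - ω ^ 2) * om_cube - om_sq
      | linear_combination (ω ^ 3 + 1 - ω) * om_cube - om_sq
      | linear_combination (ω ^ 3 + 2 - ω - ω ^ 2) * om_cube - om_sq
  exact hπ.not_isUnit (h3.isUnit_of_dvd' dvd_rfl (key ▸ h.mul_right _))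

theorem chi_congr (χ : Zω → Zω → Zω) (hχ : IsCubicSymbol χ) (π : Zω) (hπ : Prime π)
    (h3 : IsCoprime π 3) (a b : Zω) (h : π ∣ a - b) : χ a π = χ b π := by
  by_cases hb : π ∣ b
  · have ha : π ∣ a := by simpa using h.add hb
    rw [(hχ.2.2.2 a π hπ h3).1 ha, (hχ.2.2.2 b π hπ h3).1 hb]
  · have ha : ¬ π ∣ a := fun ha => hb (by simpa using ha.sub h)
    obtain ⟨a1, a2⟩ := (hχ.2.2.2 a π hπ h3).2 ha
    obtain ⟨b1, b2⟩ := (hχ.2.2.2 b π hπ h3).2 hb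
    refine roots_eq π _ _ hπ h3 a1 b1 ?_
    have h4 := h.trans (sub_dvd_pow_sub_pow a b ((NmNat π - 1) / 3))
    have := (h4.sub a2).add b2
    convert this using 1
    ring

theorem eE_add (x y : ℂ) : eE (x + y) = eE x * eE y := by
  rw [eE, eE, eE, ← Complex.exp_add]
  congr 1
  simp
  ring

theorem eE_int (x : Zω) : eE (x : ℂ) = 1 := by
  obtain ⟨a, b, rfl⟩ := Zw_rep x
  rw [eE, Complex.exp_eq_one_iff]
  refine ⟨2 * a - b, ?_⟩
  simp [ωZ, om_conj]
  linear_combination (2 * Real.pi * Complex.I * b : ℂ) * om_sq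

theorem exists_int_of_eE (z : ℂ) (h : eE z = 1) : ∃ n : ℤ, z + (starRingEnd ℂ) z = n := by
  rw [eE, Complex.exp_eq_one_iff] at h
  obtain ⟨n, hn⟩ := h
  refine ⟨n, ?_⟩
  have : (2 * Real.pi * Complex.I : ℂ) ≠ 0 := Complex.two_pi_I_ne_zero
  apply mul_left_cancel₀ this
  rw [hn]; ring

theorem exists_t (π r : Zω) (hπ : Prime π) (h3 : IsCoprime π 3) (hco : IsCoprime π r) :
    ∃ t : Zω, eE (((r * t : Zω) : ℂ) / π) ≠ 1 := by
  by_contra! hcon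
  have hπ0 : (π : ℂ) ≠ 0 := fun h => hπ.ne_zero (Subtype.ext h)
  obtain ⟨a, ha⟩ := exists_int_of_eE _ (hcon 1)
  obtain ⟨b, hb⟩ := exists_int_of_eE _ (hcon ωZ)
  set z : ℂ := (r : ℂ) / π with hz
  have e1 : ((r * 1 : Zω) : ℂ) / π = z := by simp [hz]
  have e2 : ((r * ωZ : Zω) : ℂ) / π = z * ω := by simp [hz, ωZ]; ring
  rw [e1] at ha
  rw [e2, map_mul, om_conj] at hb
  have h : z * (ω ^ 2 - ω) = a * ω ^ 2 - b := by
    linear_combination ω ^ 2 * ha - hb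
  have hr : (r : ℂ) = z * π := by rw [hz]; field_simp
  have h2 : (r : ℂ) * 3 = π * ((a * ω ^ 2 - b) * (ω - ω ^ 2)) := by
    rw [← h, hr]
    clear_value z
    linear_combination (z * π) * om_sq - (z * π) * (2 - ω) * om_cube
  have h4 : π ∣ r * 3 := ⟨(a * ωZ ^ 2 - b) * (ωZ - ωZ ^ 2), Subtype.ext (by
    have h33 : ((3 : Zω) : ℂ) = 3 := rfl
    simpa [ωZ, h33] using h2)⟩
  exact hπ.not_isUnit ((hco.mul_right h3).isUnit_of_dvd' dvd_rfl h4)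

theorem nm_mod (π : Zω) (hπ1 : (3 : Zω) ∣ (π - 1)) : NmNat π % 3 = 1 := by
  obtain ⟨s, hs⟩ := hπ1
  obtain ⟨c, d, rfl⟩ := Zw_rep s
  have : π = ((1 + 3 * c : ℤ) : Zω) + ((3 * d : ℤ) : Zω) * ωZ := by
    push_cast; linear_combination hs
  rw [nmNat_eq, this, norm_eq]
  have h0 : 0 ≤ (1 + 3 * c) ^ 2 - (1 + 3 * c) * (3 * d) + (3 * d) ^ 2 := by
    nlinarith [sq_nonneg (1 + 3 * c - 3 * d), sq_nonneg (1 + 3 * c), sq_nonneg (3 * d)]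
  have h1 : (1 + 3 * c) ^ 2 - (1 + 3 * c) * (3 * d) + (3 * d) ^ 2
    = 1 + 3 * (2 * c + 3 * c ^ 2 - d - 3 * c * d + 3 * d ^ 2) := by ring
  rw [h1] at h0 ⊢
  omega

theorem exists_nontriv (χ : Zω → Zω → Zω) (hχ : IsCubicSymbol χ) (π : Zω) (hπ : Prime π)
    (hπ1 : (3 : Zω) ∣ (π - 1)) : ∃ a : Zω, ¬ π ∣ a ∧ χ a π ≠ 1 := by
  by_contra! hcon
  have hm := span_max π hπ
  let := Ideal.Quotient.field (Ideal.span {π})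
  have := finq π hπ.ne_zero
  have hcard := card_quot π hπ.ne_zero
  have hmod := nm_mod π hπ1
  have hgt : 1 < NmNat π := by rw [← hcard]; exact Finite.one_lt_card
  obtain ⟨g, hg⟩ := IsCyclic.exists_ofOrder_eq_natCard (α := (Zω ⧸ Ideal.span {π})ˣ)
  rw [Nat.card_units, hcard] at hg
  obtain ⟨a, ha⟩ := Ideal.Quotient.mk_surjective (g : Zω ⧸ Ideal.span {π})
  have hna : ¬ π ∣ a := by
    rw [← Ideal.mem_span_singleton, ← Ideal.Quotient.eq_zero_iff_mem, ha]
    exact g.ne_zero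
  have h1 := ((hχ.2.2.2 a π hπ (cop_three π hπ1)).2 hna).2
  rw [hcon a hna, ← Ideal.mem_span_singleton, ← Ideal.Quotient.mk_eq_mk_iff_sub_mem, map_pow, ha]
    at h1
  have h2 : g ^ ((NmNat π - 1) / 3) = 1 := by
    apply Units.ext; simpa using h1
  have h3 := orderOf_dvd_of_pow_eq_one h2
  rw [hg] at h3
  have := Nat.le_of_dvd (by omega) h3
  omega

theorem out_dvd (c x : Zω) :
    c ∣ Quotient.out (Ideal.Quotient.mk (Ideal.span {c}) x) - x := by
  rw [← Ideal.mem_span_singleton, ← Ideal.Quotient.mk_eq_mk_iff_sub_mem]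
  exact Quotient.out_eq _

theorem sum_zero (c : Zω) (F : Zω → ℂ) (hF : ∀ x y, c ∣ x - y → F x = F y) (τ : Zω → Zω)
    (σ : (Zω ⧸ Ideal.span {c}) ≃ (Zω ⧸ Ideal.span {c}))
    (hσ : ∀ x, σ (Ideal.Quotient.mk _ x) = Ideal.Quotient.mk _ (τ x)) (κ : ℂ) (hκ : κ ≠ 1)
    (h : ∀ x, F (τ x) = κ * F x) : ∑' q : Zω ⧸ Ideal.span {c}, F (Quotient.out q) = 0 := by
  have h1 : ∑' q : Zω ⧸ Ideal.span {c}, F (Quotient.out q)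
      = κ * ∑' q : Zω ⧸ Ideal.span {c}, F (Quotient.out q) := by
    rw [← tsum_mul_left, ← σ.tsum_eq (fun q => F (Quotient.out q))]
    congr 1
    funext q
    rw [← h]
    apply hF
    have : q = Ideal.Quotient.mk (Ideal.span {c}) (Quotient.out q) := (Quotient.out_eq q).symm
    have hs : σ q = Ideal.Quotient.mk _ (τ (Quotient.out q)) := by
      rw [← hσ, ← this]
    rw [hs]
    exact (out_dvd c _)
  have h2 : (κ - 1) * ∑' q : Zω ⧸ Ideal.span {c}, F (Quotient.out q) = 0 := by
    linear_combination -h1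
  exact (mul_eq_zero.1 h2).resolve_left (sub_ne_zero.2 hκ)

open Complex in
/-- for a prime `π ≡ 1 (mod 3)`, `r ≡ 1 (mod 3)` coprime to `π`,
and integers `k > 0`, `j ≥ 0` with `k ≠ j + 1`:
`g(rπʲ, πᵏ) = φ(πᵏ)` if `3 ∣ k` and `k ≤ j`, and `= 0` otherwise,
where `φ(πᵏ)` is the number of units of `ℤ[ω]/πᵏ`. -/
theorem gauss_prime_power (χ : Zω → Zω → Zω) (hχ : IsCubicSymbol χ)
    (π r : Zω) (hπ : Prime π) (hπ1 : (3 : Zω) ∣ (π - 1)) (hr : (3 : Zω) ∣ (r - 1))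
    (hco : IsCoprime π r) (k j : ℕ) (hk : 0 < k) (hkj : k ≠ j + 1) :
    gauss χ (r * π ^ j) (π ^ k) =
      if 3 ∣ k ∧ k ≤ j then (Nat.card (Zω ⧸ Ideal.span {π ^ k})ˣ : ℂ) else 0 := by
  have h3 := cop_three π hπ1
  have hπ0 : (π : ℂ) ≠ 0 := fun h => hπ.ne_zero (Subtype.ext h)
  have hdk : π ∣ π ^ k := dvd_pow_self _ hk.ne'
  by_cases hle : k ≤ j
  · obtain ⟨n, rfl⟩ := Nat.exists_eq_add_of_le hle
    have hg : gauss χ (r * π ^ (k + n)) (π ^ k) =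
        ∑' q : Zω ⧸ Ideal.span {π ^ k}, ((χ (Quotient.out q) π : Zω) : ℂ) ^ k := by
      unfold gauss
      congr 1
      funext q
      have : ((r * π ^ (k + n) * Quotient.out q : Zω) : ℂ) / ((π ^ k : Zω) : ℂ)
          = ((r * π ^ n * Quotient.out q : Zω) : ℂ) := by
        push_cast
        rw [pow_add]
        field_simp
      rw [this, eE_int, chi_pow χ hχ]
      simp
    rw [hg]
    by_cases hk3 : 3 ∣ k
    · rw [if_pos ⟨hk3, hle⟩]
      have := finq (π ^ k) (pow_ne_zero _ hπ.ne_zero)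
      let := Fintype.ofFinite (Zω ⧸ Ideal.span {π ^ k})
      classical
      have hu : ∀ q : Zω ⧸ Ideal.span {π ^ k},
          ((χ (Quotient.out q) π : Zω) : ℂ) ^ k = if IsUnit q then 1 else 0 := by
        intro q
        have hq : Ideal.Quotient.mk (Ideal.span {π ^ k}) (Quotient.out q) = q := Quotient.out_eq q
        by_cases hd : π ∣ Quotient.out q
        · rw [(hχ.2.2.2 _ π hπ h3).1 hd, if_neg]
          · simp [hk.ne']
          · intro hun
            obtain ⟨b, hb⟩ := hun.exists_right_inv
            obtain ⟨b, rfl⟩ := Ideal.Quotient.mk_surjective b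
            rw [← hq, ← map_mul, ← map_one (Ideal.Quotient.mk _),
              Ideal.Quotient.mk_eq_mk_iff_sub_mem, Ideal.mem_span_singleton] at hb
            have h5 := (hd.mul_right b).sub (hdk.trans hb)
            exact hπ.not_isUnit (isUnit_of_dvd_one (by simpa using h5))
        · rw [if_pos]
          · obtain ⟨m, rfl⟩ := hk3
            rw [pow_mul]
            rcases ((hχ.2.2.2 _ π hπ h3).2 hd).1 with h | h | h <;> rw [h]
            · simp
            · rw [om_cube, one_pow]
            · rw [om_six, one_pow]
          · obtain ⟨a, b, hab⟩ := (cop_of_not_dvd π hπ _ hd).pow_left (m := k)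
            rw [← hq]
            refine IsUnit.of_mul_eq_one (Ideal.Quotient.mk _ b) ?_
            rw [← map_mul, ← map_one (Ideal.Quotient.mk _),
              Ideal.Quotient.mk_eq_mk_iff_sub_mem, Ideal.mem_span_singleton]
            exact ⟨-a, by linear_combination hab⟩
      rw [tsum_fintype, Finset.sum_congr rfl (fun q _ => hu q), Finset.sum_boole]
      congr 1
      have e : (Zω ⧸ Ideal.span {π ^ k})ˣ ≃ {q : Zω ⧸ Ideal.span {π ^ k} // IsUnit q} :=
        Equiv.ofBijective (fun u => ⟨u, u.isUnit⟩)
          ⟨fun u v h => Units.ext (congrArg Subtype.val h), fun q => ⟨q.2.unit, rfl⟩⟩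
      rw [Nat.card_congr e, Nat.card_eq_fintype_card, Fintype.card_subtype]
    · rw [if_neg (fun h => hk3 h.1)]
      obtain ⟨a, ha, ha1⟩ := exists_nontriv χ hχ π hπ hπ1
      obtain ⟨s, b, hab⟩ := (cop_of_not_dvd π hπ _ ha).pow_left (m := k)
      have hun : Ideal.Quotient.mk (Ideal.span {π ^ k}) a * Ideal.Quotient.mk _ b = 1 := by
        rw [← map_mul, ← map_one (Ideal.Quotient.mk _),
              Ideal.Quotient.mk_eq_mk_iff_sub_mem, Ideal.mem_span_singleton]
        exact ⟨-s, by linear_combination hab⟩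
      let u : (Zω ⧸ Ideal.span {π ^ k})ˣ := ⟨_, _, hun, by rw [mul_comm]; exact hun⟩
      refine sum_zero (π ^ k) (fun x => ((χ x π : Zω) : ℂ) ^ k) ?_ (fun x => a * x)
        u.mulLeft ?_ (((χ a π : Zω) : ℂ) ^ k) ?_ ?_
      · intro x y hxy
        simp only [chi_congr χ hχ π hπ h3 x y (hdk.trans hxy)]
      · intro x
        simp [u]
      · have hprim : ∀ z : ℂ, z ^ 3 = 1 → z ≠ 1 → z ^ k ≠ 1 := by
          intro z hz hz1 hzk
          have h6 : orderOf z ∣ 3 := orderOf_dvd_of_pow_eq_one hz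
          rcases (Nat.dvd_prime Nat.prime_three).1 h6 with h7 | h7
          · exact hz1 (orderOf_eq_one_iff.1 h7)
          · exact hk3 (h7 ▸ orderOf_dvd_of_pow_eq_one hzk)
        apply hprim
        · rcases ((hχ.2.2.2 _ π hπ h3).2 ha).1 with h | h | h <;> rw [h]
          · simp
          · rw [om_cube]
          · rw [om_six]
        · exact fun h => ha1 (Subtype.ext h)
      · intro x
        simp only [hχ.2.1 a x π]
        push_cast
        rw [mul_pow]
  · rw [if_neg (fun h => hle h.2)]
    obtain ⟨n, rfl⟩ : ∃ n, k = j + (n + 1) + 1 := ⟨k - j - 2, by omega⟩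
    obtain ⟨t, ht⟩ := exists_t π r hπ h3 hco
    set k := j + (n + 1) + 1 with hkdef
    refine sum_zero (π ^ k) (fun x => ((χ x (π ^ k) : Zω) : ℂ) *
      eE (((r * π ^ j * x : Zω) : ℂ) / ((π ^ k : Zω) : ℂ))) ?_ (fun x => x + π ^ (n + 1) * t)
      (Equiv.addRight (Ideal.Quotient.mk _ (π ^ (n + 1) * t))) ?_ _ ht ?_
    · intro x y hxy
      have h4 := chi_congr χ hχ π hπ h3 x y (hdk.trans hxy)
      obtain ⟨s, hs⟩ := hxy
      have hx : x = y + π ^ k * s := by linear_combination hs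
      have h5 : ((r * π ^ j * x : Zω) : ℂ) / ((π ^ k : Zω) : ℂ) =
        ((r * π ^ j * y : Zω) : ℂ) / ((π ^ k : Zω) : ℂ) + ((r * π ^ j * s : Zω) : ℂ) := by
        rw [hx]
        push_cast
        field_simp
      simp only [chi_pow χ hχ, h4]
      rw [h5, eE_add, eE_int, mul_one]
    · intro x
      simp
    · intro x
      have h4 := chi_congr χ hχ π hπ h3 (x + π ^ (n + 1) * t) x
        (by rw [add_sub_cancel_left]; exact (dvd_pow_self _ (by omega)).mul_right _)
      have h5 : ((r * π ^ j * (x + π ^ (n + 1) * t) : Zω) : ℂ) / ((π ^ k : Zω) : ℂ) =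
        ((r * π ^ j * x : Zω) : ℂ) / ((π ^ k : Zω) : ℂ) + ((r * t : Zω) : ℂ) / π := by
        push_cast
        rw [hkdef, pow_succ, pow_add]
        field_simp
        ring
      simp only [chi_pow χ hχ, h4]
      rw [h5, eE_add]
      ring
end
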